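/- arXiv:2603.14447 — 4 statements merged into one kernel-verified Lean document; each statement's English description precedes it below -/
import Mathlib

section
/- Let n ≥ 1 and let F : ℝⁿ → ℝⁿ be continuous and dissipative, i.e. ⟪F x − F y, x − y⟫ ≤ 0 for all x, y ∈ ℝⁿ. Then for every ε > 0 and every y ∈ ℝⁿ there exists a unique x ∈ ℝⁿ such that x − ε·F(x) = y. -/
lemma fin_case {E ι : Type*} [NormedAddCommGroup E] [InnerProductSpace ℝ E] [Fintype ι]
    [Nonempty ι] (a z : ι → E) (hm : ∀ i j, 0 ≤ inner ℝ (a i - a j) (z i - z j)) :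
    ∃ x : E, ∀ i, 0 ≤ inner ℝ (a i + x) (z i - x) := by
  classical
  let h : (ι → ℝ) → ℝ := fun l => inner ℝ (∑ i, l i • (z i - a i)) (∑ i, l i • (z i - a i)) / 4
    + ∑ i, l i * inner ℝ (a i) (z i)
  have hc : Continuous h := by
    dsimp only [h]
    fun_prop
  obtain ⟨l, hl, hmin⟩ := (isCompact_stdSimplex ℝ ι).exists_isMinOn
    ⟨_, single_mem_stdSimplex ℝ (Classical.arbitrary ι)⟩ hc.continuousOn
  have hl0 := hl.1
  have hl1 := hl.2
  set ab := ∑ i, l i • a i with hab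
  set zb := ∑ i, l i • z i with hzb
  set S := ∑ i, l i * inner ℝ (a i) (z i) with hS
  have hq : ∑ i, l i • (z i - a i) = zb - ab := by
    simp only [smul_sub, Finset.sum_sub_distrib, hab, hzb]
  have hv : h l = inner ℝ (zb - ab) (zb - ab) / 4 + S := by
    simp only [h, hq, ← hS]
  have h1 : ∀ j, 0 ≤ S - inner ℝ ab (z j) - inner ℝ (a j) zb + inner ℝ (a j) (z j) := by
    intro j
    have : 0 ≤ ∑ i, l i * inner ℝ (a i - a j) (z i - z j) :=
      Finset.sum_nonneg fun i _ => mul_nonneg (hl0 i) (hm i j)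
    have e : ∑ i, l i * inner ℝ (a i - a j) (z i - z j)
        = S - inner ℝ ab (z j) - inner ℝ (a j) zb + inner ℝ (a j) (z j) := by
      simp only [inner_sub_left, inner_sub_right, mul_sub, Finset.sum_sub_distrib, hab, hzb, hS,
        sum_inner, inner_sum, real_inner_smul_left, real_inner_smul_right]
      rw [← Finset.sum_mul (f := l), hl1]
      ring
    rwa [e] at this
  have h2 : 0 ≤ S - inner ℝ ab zb := by
    have : 0 ≤ ∑ j, l j * (S - inner ℝ ab (z j) - inner ℝ (a j) zb + inner ℝ (a j) (z j)) :=
      Finset.sum_nonneg fun i _ => mul_nonneg (hl0 i) (h1 i)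
    have e : ∑ j, l j * (S - inner ℝ ab (z j) - inner ℝ (a j) zb + inner ℝ (a j) (z j))
        = 2 * (S - inner ℝ ab zb) := by
      have e1 : ∑ j, l j * inner ℝ ab (z j) = inner ℝ ab zb := by
        simp only [hzb, inner_sum, real_inner_smul_right]
      have e2 : ∑ j, l j * inner ℝ (a j) zb = inner ℝ ab zb := by
        rw [hab, sum_inner]
        simp only [real_inner_smul_left]
      simp only [mul_sub, mul_add, Finset.sum_sub_distrib, Finset.sum_add_distrib, e1, e2]
      rw [← Finset.sum_mul, hl1, ← hS]
      ring
    linarith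
  have h3 : 0 ≤ h l := by
    have := real_inner_self_nonneg (x := zb + ab)
    rw [hv]
    simp only [inner_sub_left, inner_sub_right, inner_add_left, inner_add_right] at *
    rw [real_inner_comm ab zb] at *
    linarith
  refine ⟨(1 / 2 : ℝ) • (zb - ab), fun i => ?_⟩
  set q := zb - ab with hqd
  set d := (z i - a i) - q with hd
  have h4 : ∀ t : ℝ, 0 < t → t ≤ 1 →
      0 ≤ inner ℝ q d / 2 + (inner ℝ (a i) (z i) - S) + t * (inner ℝ d d / 4) := by
    intro t ht ht1
    have hmem : (1 - t) • l + t • (Pi.single i 1 : ι → ℝ) ∈ stdSimplex ℝ ι :=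
      convex_stdSimplex ℝ ι hl (single_mem_stdSimplex ℝ i) (by linarith) ht.le (by ring)
    have hle : h l ≤ h ((1 - t) • l + t • (Pi.single i 1 : ι → ℝ)) := hmin hmem
    have e1 : ∑ k, ((1 - t) • l + t • (Pi.single i 1 : ι → ℝ)) k • (z k - a k) = q + t • d := by
      simp only [Pi.add_apply, Pi.smul_apply, add_smul, Finset.sum_add_distrib, smul_eq_mul,
        mul_smul, ← Finset.smul_sum, hq, Pi.single_apply, ite_smul, one_smul, zero_smul,
        Finset.sum_ite_eq', Finset.mem_univ, if_true, hd]
      module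
    have e2 : ∑ k, ((1 - t) • l + t • (Pi.single i 1 : ι → ℝ)) k * inner ℝ (a k) (z k)
        = S + t * (inner ℝ (a i) (z i) - S) := by
      simp only [Pi.add_apply, Pi.smul_apply, add_mul, Finset.sum_add_distrib, smul_eq_mul,
        mul_assoc, ← Finset.mul_sum, ← hS, Pi.single_apply, ite_mul, one_mul, zero_mul,
        Finset.sum_ite_eq', Finset.mem_univ, if_true]
      ring
    have e3 : h ((1 - t) • l + t • (Pi.single i 1 : ι → ℝ)) =
        inner ℝ (q + t • d) (q + t • d) / 4 + (S + t * (inner ℝ (a i) (z i) - S)) := by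
      simp only [h, e1, e2]
    rw [e3, hv] at hle
    simp only [inner_add_left, inner_add_right, real_inner_smul_left, real_inner_smul_right] at hle
    rw [real_inner_comm q d] at hle
    refine nonneg_of_mul_nonneg_right (a := t) ?_ ht
    linarith
  have h5 : 0 ≤ inner ℝ q d / 2 + (inner ℝ (a i) (z i) - S) := by
    by_contra hneg
    push Not at hneg
    set B := inner ℝ q d / 2 + (inner ℝ (a i) (z i) - S) with hB
    have hD : 0 ≤ inner ℝ d d / 4 := by have := real_inner_self_nonneg (x := d); linarith
    set D := inner ℝ d d / 4
    have hpos : 0 < D + -B := by linarith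
    have := h4 ((-B) / (2 * (D + -B))) (by apply div_pos <;> linarith)
      (by rw [div_le_one (by linarith)]; linarith)
    have e : (-B) / (2 * (D + -B)) * D ≤ (-B) / 2 := by
      rw [div_mul_eq_mul_div, div_le_div_iff₀ (by linarith) (by norm_num)]
      nlinarith
    linarith
  have h6 : inner ℝ q (z i - a i) = inner ℝ q d + inner ℝ q q := by
    rw [hd, inner_sub_right q (z i - a i) q]; ring
  rw [hv] at h3
  simp only [inner_add_left, inner_sub_right, real_inner_smul_left, real_inner_smul_right] at *
  rw [real_inner_comm q (a i)]
  linarith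

open Filter Topology in
lemma minty {E : Type*} [NormedAddCommGroup E] [InnerProductSpace ℝ E] [ProperSpace E]
    (A : E → E) (hA : Continuous A) (hm : ∀ x y, 0 ≤ inner ℝ (A x - A y) (x - y)) :
    ∃ x, A x + x = 0 := by
  classical
  let C : E → Set E := fun z => {x | 0 ≤ inner ℝ (A z + x) (z - x)}
  have hcl : ∀ z, IsClosed (C z) := fun z =>
    isClosed_le continuous_const (by fun_prop)
  have hcomp : IsCompact (C 0) := by
    refine (isCompact_closedBall (0 : E) ‖A 0‖).of_isClosed_subset (hcl 0) ?_
    intro x hx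
    simp only [C, Set.mem_setOf_eq, zero_sub, inner_neg_right, inner_add_left] at hx
    rw [mem_closedBall_zero_iff]
    have h1 := abs_real_inner_le_norm (A 0) x
    have h2 := neg_abs_le (inner ℝ (A 0) x)
    rw [real_inner_self_eq_norm_sq] at hx
    by_contra hlt
    push Not at hlt
    nlinarith [norm_nonneg (A 0), norm_nonneg x]
  obtain ⟨x, -, hx⟩ := hcomp.inter_iInter_nonempty C hcl (by
    intro u
    have : Nonempty ↥(insert (0 : E) u) := ⟨⟨0, by simp⟩⟩
    obtain ⟨x, hx⟩ := fin_case (ι := ↥(insert (0 : E) u)) (fun i => A i) (fun i => (i : E))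
      (fun i j => hm i j)
    refine ⟨x, hx ⟨0, by simp⟩, ?_⟩
    simp only [Set.mem_iInter]
    exact fun i hi => hx ⟨i, by simp [hi]⟩)
  rw [Set.mem_iInter] at hx
  refine ⟨x, ?_⟩
  set w := -(A x + x) with hw
  have hpos : ∀ t : ℝ, 0 < t → 0 ≤ inner ℝ (A (x + t • w) + x) w := by
    intro t ht
    have := hx (x + t • w)
    simp only [C, Set.mem_setOf_eq, add_sub_cancel_left, real_inner_smul_right] at this
    exact nonneg_of_mul_nonneg_right this ht
  have hlim : Tendsto (fun t : ℝ => inner ℝ (A (x + t • w) + x) w) (𝓝[>] 0)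
      (𝓝 (inner ℝ (A (x + (0 : ℝ) • w) + x) w)) := by
    have : Continuous (fun t : ℝ => (inner ℝ (A (x + t • w) + x) w : ℝ)) := by fun_prop
    exact this.continuousAt.tendsto.mono_left nhdsWithin_le_nhds
  have h0 := ge_of_tendsto hlim (eventually_nhdsWithin_of_forall fun t ht => hpos t ht)
  rw [zero_smul, add_zero, hw, inner_neg_right] at h0
  have h1 := real_inner_self_nonneg (x := A x + x)
  exact inner_self_eq_zero (𝕜 := ℝ).1 (by linarith)

/-- For `n ≥ 1` and a continuous dissipative map `F : ℝⁿ → ℝⁿ`, for every `ε > 0` and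
every `y` there exists a unique `x` with `x - ε • F x = y`. -/
theorem stmt_0 (n : ℕ) (hn : 1 ≤ n)
    (F : EuclideanSpace ℝ (Fin n) → EuclideanSpace ℝ (Fin n))
    (hFcont : Continuous F)
    (hFdiss : ∀ x y : EuclideanSpace ℝ (Fin n),
      (inner ℝ (F x - F y) (x - y) : ℝ) ≤ 0)
    (ε : ℝ) (hε : 0 < ε) (y : EuclideanSpace ℝ (Fin n)) :
    ∃! x : EuclideanSpace ℝ (Fin n), x - ε • F x = y := by
  obtain ⟨x, hx⟩ := minty (fun x => -(ε • F x) - y) (by fun_prop) (by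
    intro u v
    have e : (-(ε • F u) - y) - (-(ε • F v) - y) = (-ε) • (F u - F v) := by module
    rw [e, real_inner_smul_left]
    nlinarith [hFdiss u v])
  have hx' : x - ε • F x = y := by
    rw [← sub_eq_zero, ← hx]; abel
  refine ⟨x, hx', fun u hu => ?_⟩
  have e : u - x = ε • (F u - F x) := by
    have : u - ε • F u = x - ε • F x := by rw [hx']; exact hu
    rw [smul_sub, sub_eq_sub_iff_add_eq_add]
    rw [sub_eq_sub_iff_add_eq_add] at this
    rw [this]; abel
  have h1 : inner ℝ (u - x) (u - x) ≤ 0 := by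
    nth_rewrite 1 [e]
    rw [real_inner_smul_left]
    nlinarith [hFdiss u x]
  have h2 := real_inner_self_nonneg (x := u - x)
  exact sub_eq_zero.1 (inner_self_eq_zero (𝕜 := ℝ).1 (by linarith))
end

section
/- Let F : ℝⁿ → ℝⁿ be continuous and dissipative. Let ε¹, ε² > 0, and for i = 1, 2 let J^{εⁱ} : ℝⁿ → ℝⁿ satisfy J^{εⁱ}(y) − εⁱ·F(J^{εⁱ}(y)) = y for all y, with F^{εⁱ} := F ∘ J^{εⁱ}. Then for all x¹, x² ∈ ℝⁿ: ⟪x¹ − x², F^{ε¹}(x¹) − F^{ε²}(x²)⟫ ≤ (ε¹ + ε²)·(|F(x¹)| + |F(x²)|)². -/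
/-- Cross estimate for Yosida approximations with two parameters `ε¹, ε²`. -/
theorem stmt_6 (n : ℕ)
    (F : EuclideanSpace ℝ (Fin n) → EuclideanSpace ℝ (Fin n))
    (hFcont : Continuous F)
    (hFdiss : ∀ x y : EuclideanSpace ℝ (Fin n),
      (inner ℝ (F x - F y) (x - y) : ℝ) ≤ 0)
    (ε₁ ε₂ : ℝ) (hε₁ : 0 < ε₁) (hε₂ : 0 < ε₂)
    (J₁ J₂ : EuclideanSpace ℝ (Fin n) → EuclideanSpace ℝ (Fin n))
    (hJ₁ : ∀ y : EuclideanSpace ℝ (Fin n), J₁ y - ε₁ • F (J₁ y) = y)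
    (hJ₂ : ∀ y : EuclideanSpace ℝ (Fin n), J₂ y - ε₂ • F (J₂ y) = y) :
    ∀ x₁ x₂ : EuclideanSpace ℝ (Fin n),
      (inner ℝ (x₁ - x₂) ((F ∘ J₁) x₁ - (F ∘ J₂) x₂) : ℝ)
        ≤ (ε₁ + ε₂) * (‖F x₁‖ + ‖F x₂‖) ^ 2 := by
  have key : ∀ (ε : ℝ) (_ : 0 < ε) (x j : EuclideanSpace ℝ (Fin n))
      (_ : j - ε • F j = x), ‖F j‖ ≤ ‖F x‖ := by
    intro ε hε x j h
    have h1 := hFdiss j x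
    have h2 : j - x = ε • F j := by rw [← h]; abel_nf
    rw [h2, inner_smul_right, inner_sub_left, real_inner_self_eq_norm_sq] at h1
    have h3 := real_inner_le_norm (F x) (F j)
    have h4 : ‖F j‖ ^ 2 - inner ℝ (F x) (F j) ≤ 0 := by
      by_contra hc
      push Not at hc
      have := mul_pos hε hc
      linarith
    by_contra hc
    push Not at hc
    nlinarith [norm_nonneg (F x), norm_nonneg (F j)]
  intro x₁ x₂
  have k₁ := key ε₁ hε₁ x₁ _ (hJ₁ x₁)
  have k₂ := key ε₂ hε₂ x₂ _ (hJ₂ x₂)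
  have hd := hFdiss (J₁ x₁) (J₂ x₂)
  have e : x₁ - x₂ = (J₁ x₁ - J₂ x₂) - (ε₁ • F (J₁ x₁) - ε₂ • F (J₂ x₂)) := by
    conv_lhs => rw [← hJ₁ x₁, ← hJ₂ x₂]
    abel
  simp only [Function.comp]
  rw [real_inner_comm] at hd
  rw [e, inner_sub_left]
  generalize F (J₁ x₁) = a at *
  generalize F (J₂ x₂) = b at *
  have e2 : inner ℝ (ε₁ • a - ε₂ • b) (a - b)
      = ε₁ * ‖a‖ ^ 2 + ε₂ * ‖b‖ ^ 2 - (ε₁ + ε₂) * inner ℝ a b := by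
    simp only [inner_sub_left, inner_sub_right, real_inner_smul_left,
      real_inner_self_eq_norm_sq, real_inner_comm a b]
    ring
  have h3 := real_inner_le_norm a b
  have h4 : ‖a‖ * ‖b‖ ≤ ‖F x₁‖ * ‖F x₂‖ := by gcongr
  have h5 : inner ℝ a b ≤ (‖F x₁‖ + ‖F x₂‖) ^ 2 := by
    nlinarith [norm_nonneg (F x₁), norm_nonneg (F x₂),
      mul_nonneg (norm_nonneg (F x₁)) (norm_nonneg (F x₂))]
  have h6 := mul_le_mul_of_nonneg_left h5 (add_pos hε₁ hε₂).le
  have h7 : 0 ≤ ε₁ * ‖a‖ ^ 2 := by positivity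
  have h8 : 0 ≤ ε₂ * ‖b‖ ^ 2 := by positivity
  linarith
end

section
/- Let F : ℝⁿ → ℝⁿ be continuous and dissipative, and for each ε > 0 let J^ε : ℝⁿ → ℝⁿ satisfy J^ε(y) − ε·F(J^ε(y)) = y for all y, with F^ε := F ∘ J^ε. If x ∈ ℝⁿ and (x^ε)_{ε>0} is a family in ℝⁿ with x^ε → x as ε → 0⁺, then F^ε(x^ε) → F(x) as ε → 0⁺. -/
open Filter Topology

/-- If `xᵉ → x` as `ε → 0⁺`, then the Yosida approximations satisfy
`Fᵉ(xᵉ) = F (J ε (xᵉ)) → F x` as `ε → 0⁺`. -/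
theorem stmt_7 (n : ℕ)
    (F : EuclideanSpace ℝ (Fin n) → EuclideanSpace ℝ (Fin n))
    (hFcont : Continuous F)
    (hFdiss : ∀ x y : EuclideanSpace ℝ (Fin n),
      (inner ℝ (F x - F y) (x - y) : ℝ) ≤ 0)
    (J : ℝ → EuclideanSpace ℝ (Fin n) → EuclideanSpace ℝ (Fin n))
    (hJ : ∀ ε : ℝ, 0 < ε → ∀ y : EuclideanSpace ℝ (Fin n),
      J ε y - ε • F (J ε y) = y)
    (x : EuclideanSpace ℝ (Fin n)) (xε : ℝ → EuclideanSpace ℝ (Fin n))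
    (hxε : Tendsto xε (𝓝[>] 0) (𝓝 x)) :
    Tendsto (fun ε : ℝ => (F ∘ J ε) (xε ε)) (𝓝[>] 0) (𝓝 (F x)) := by
  have key : ∀ ε : ℝ, 0 < ε → ‖J ε (xε ε) - x‖ ≤ ‖xε ε - x + ε • F x‖ := by
    intro ε hε
    have h1 := hJ ε hε (xε ε)
    have h2 := hFdiss (J ε (xε ε)) x
    generalize J ε (xε ε) = j at h1 h2 ⊢
    have h3 : j - x = (xε ε - x + ε • F x) + ε • (F j - F x) := by
      rw [← h1, smul_sub]; abel
    have h4 : (inner ℝ (j - x) (j - x) : ℝ)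
        = inner ℝ (xε ε - x + ε • F x) (j - x) + ε * inner ℝ (F j - F x) (j - x) := by
      rw [← real_inner_smul_left, ← inner_add_left, ← h3]
    have h5 := real_inner_le_norm (xε ε - x + ε • F x) (j - x)
    rw [real_inner_self_eq_norm_mul_norm] at h4
    have h6 := mul_nonpos_of_nonneg_of_nonpos hε.le h2
    by_contra! hlt
    have h7 : 0 < ‖j - x‖ := lt_of_le_of_lt (norm_nonneg _) hlt
    have h8 := mul_lt_mul_of_pos_right hlt h7
    linarith
  have hid : Tendsto (fun ε : ℝ => ε) (𝓝[>] 0) (𝓝 0) := tendsto_nhdsWithin_of_tendsto_nhds tendsto_id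
  have hlim : Tendsto (fun ε : ℝ => ‖xε ε - x + ε • F x‖) (𝓝[>] 0) (𝓝 0) := by
    have h := ((hxε.sub_const x).add (hid.smul_const (F x))).norm
    simpa using h
  have hJx : Tendsto (fun ε : ℝ => J ε (xε ε)) (𝓝[>] 0) (𝓝 x) := by
    rw [tendsto_iff_norm_sub_tendsto_zero]
    refine squeeze_zero' (Eventually.of_forall fun _ => norm_nonneg _) ?_ hlim
    filter_upwards [self_mem_nhdsWithin] with ε hε using key ε hε
  exact (hFcont.tendsto x).comp hJx
end

section
/- Let f : ℝ × ℝ^d → ℝ be continuous, let a ≥ 0, C ≥ 0 be constants and φ : [0,∞) → [0,∞) a nondecreasing continuous function, and assume |f(y,z)| ≤ a + φ(|y|) + C·|z| for all (y,z) and (y − y')·(f(y,z) − f(y',z)) ≤ 0 for all y, y', z. For a real number n ≥ C define f_n(y,z) := sup_{q ∈ ℝ^d} ( f(y,q) − n·|z − q| ). Then for every (y,z): the supremum is finite; f(y,z) ≤ f_n(y,z); (y − y')·(f_n(y,z) − f_n(y',z)) ≤ 0 for all y, y', z; |f_n(y,z) − f_n(y,z')| ≤ n·|z − z'| for all y, z,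 z'; and |f_n(y,z)| ≤ a + φ(|y|) + C·|z|. -/
/-- Properties of the sup-convolution `f_n(y,z) = ⨆ q, (f y q - n‖z - q‖)` of a
continuous generator `f` that is monotone (decreasing) in `y` and of general growth in `y`
and linear growth in `z`. -/
theorem stmt_8 (d : ℕ)
    (f : ℝ → EuclideanSpace ℝ (Fin d) → ℝ)
    (hfcont : Continuous fun p : ℝ × EuclideanSpace ℝ (Fin d) => f p.1 p.2)
    (a C : ℝ) (ha : 0 ≤ a) (hC : 0 ≤ C)
    (φ : ℝ → ℝ)
    (hφmono : MonotoneOn φ (Set.Ici 0))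
    (hφcont : ContinuousOn φ (Set.Ici 0))
    (hφnonneg : ∀ u : ℝ, 0 ≤ u → 0 ≤ φ u)
    (hgrowth : ∀ (y : ℝ) (z : EuclideanSpace ℝ (Fin d)),
      |f y z| ≤ a + φ |y| + C * ‖z‖)
    (hmono : ∀ (y y' : ℝ) (z : EuclideanSpace ℝ (Fin d)),
      (y - y') * (f y z - f y' z) ≤ 0)
    (n : ℝ) (hn : C ≤ n) :
    (∀ (y : ℝ) (z : EuclideanSpace ℝ (Fin d)),
        BddAbove (Set.range fun q : EuclideanSpace ℝ (Fin d) => f y q - n * ‖z - q‖)) ∧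
    (∀ (y : ℝ) (z : EuclideanSpace ℝ (Fin d)),
        f y z ≤ ⨆ q : EuclideanSpace ℝ (Fin d), (f y q - n * ‖z - q‖)) ∧
    (∀ (y y' : ℝ) (z : EuclideanSpace ℝ (Fin d)),
        (y - y') *
          ((⨆ q : EuclideanSpace ℝ (Fin d), (f y q - n * ‖z - q‖)) -
            (⨆ q : EuclideanSpace ℝ (Fin d), (f y' q - n * ‖z - q‖))) ≤ 0) ∧
    (∀ (y : ℝ) (z z' : EuclideanSpace ℝ (Fin d)),
        |(⨆ q : EuclideanSpace ℝ (Fin d), (f y q - n * ‖z - q‖)) -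
            (⨆ q : EuclideanSpace ℝ (Fin d), (f y q - n * ‖z' - q‖))| ≤ n * ‖z - z'‖) ∧
    (∀ (y : ℝ) (z : EuclideanSpace ℝ (Fin d)),
        |⨆ q : EuclideanSpace ℝ (Fin d), (f y q - n * ‖z - q‖)| ≤ a + φ |y| + C * ‖z‖) := by
  have hn0 : 0 ≤ n := hC.trans hn
  have hub : ∀ (y : ℝ) (z q : EuclideanSpace ℝ (Fin d)),
      f y q - n * ‖z - q‖ ≤ a + φ |y| + C * ‖z‖ := by
    intro y z q
    have h1 := (abs_le.1 (hgrowth y q)).2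
    have h2 : ‖q‖ ≤ ‖z‖ + ‖z - q‖ := by
      have := norm_sub_le z (z - q)
      simpa using this
    have h3 := mul_le_mul_of_nonneg_left h2 hC
    have h4 := mul_le_mul_of_nonneg_right hn (norm_nonneg (z - q))
    linarith
  have hb : ∀ (y : ℝ) (z : EuclideanSpace ℝ (Fin d)),
      BddAbove (Set.range fun q : EuclideanSpace ℝ (Fin d) => f y q - n * ‖z - q‖) := by
    intro y z
    refine ⟨a + φ |y| + C * ‖z‖, ?_⟩
    · rintro _ ⟨q, rfl⟩
      exact hub y z q
  have hle : ∀ (y : ℝ) (z : EuclideanSpace ℝ (Fin d)),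
      f y z ≤ ⨆ q : EuclideanSpace ℝ (Fin d), (f y q - n * ‖z - q‖) := by
    intro y z
    have := le_ciSup (hb y z) z
    simpa using this
  have hanti : ∀ (y y' : ℝ) (z : EuclideanSpace ℝ (Fin d)), y < y' →
      (⨆ q : EuclideanSpace ℝ (Fin d), (f y' q - n * ‖z - q‖)) ≤
        ⨆ q : EuclideanSpace ℝ (Fin d), (f y q - n * ‖z - q‖) := by
    intro y y' z h
    refine ciSup_mono (hb y z) fun q => ?_
    have := hmono y y' q
    have : f y' q ≤ f y q := by
      by_contra! hc
      nlinarith [mul_pos (sub_pos.2 h) (sub_pos.2 hc)]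
    linarith
  have hlip : ∀ (y : ℝ) (z z' : EuclideanSpace ℝ (Fin d)),
      (⨆ q : EuclideanSpace ℝ (Fin d), (f y q - n * ‖z - q‖)) ≤
        (⨆ q : EuclideanSpace ℝ (Fin d), (f y q - n * ‖z' - q‖)) + n * ‖z - z'‖ := by
    intro y z z'
    refine ciSup_le fun q => ?_
    have h1 := le_ciSup (hb y z') q
    have h2 : ‖z' - q‖ ≤ ‖z - z'‖ + ‖z - q‖ := by
      have := norm_sub_le_norm_sub_add_norm_sub z' z q
      rwa [norm_sub_rev z' z] at this
    have h3 := mul_le_mul_of_nonneg_left h2 hn0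
    linarith
  refine ⟨hb, hle, ?_, ?_, ?_⟩
  · intro y y' z
    rcases lt_trichotomy y y' with h | h | h
    · exact mul_nonpos_of_nonpos_of_nonneg (by linarith) (sub_nonneg.2 (hanti y y' z h))
    · subst h; simp
    · exact mul_nonpos_of_nonneg_of_nonpos (by linarith) (sub_nonpos.2 (hanti y' y z h))
  · intro y z z'
    have h1 := hlip y z z'
    have h2 := hlip y z' z
    rw [norm_sub_rev z' z] at h2
    exact abs_le.2 ⟨by linarith, by linarith⟩
  · intro y z
    refine abs_le.2 ⟨(abs_le.1 (hgrowth y z)).1.trans (hle y z), ciSup_le (hub y z)⟩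
end
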